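/- Conditioning an i.i.d. Gaussian matrix on linear observations: let M, N, t be positive integers with t ≤ N, let σ² > 0, let A and Ã be independent M×N random matrices each having i.i.d. N(0, σ²) entries, and let U ∈ ℝ^{N×t} be a deterministic matrix of full column rank. With U† := (UᵀU)⁻¹Uᵀ and P⊥_U := I_N − U(UᵀU)⁻¹Uᵀ, the random pairs (AU, A) and (AU, (AU)·U† + Ã·P⊥_U) have the same joint distribution; equivalently, the conditional distribution of A given the observation X = AU is that of X U† + Ã P⊥_U. -/

import Mathlib

open MeasureTheory ProbabilityTheory Matrix

/-!
A linear map `x ↦ x ᵥ* B` with `Bᵀ * B = 1` carries an i.i.d. centered Gaussian vector to one of the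
same variance, because the characteristic function at `t` depends only on `‖t‖` and `t ↦ B *ᵥ t` is
an isometry. Stacking an orthogonal projection `Q` on top of `1 - Q` gives such a `B`, so
`A * Q + Ã * (1 - Q)` has the law of `A`. If `Q` projects onto the column space of `U`, this matrix
has the same product with `U` as `A`, so the two pairs are the images under `X ↦ (X * U, X)` of two
matrices with the same law.
-/

section OrthogonalProjection

lemma star_mul_self_add_star_one_sub_mul_one_sub {R : Type*} [Ring R] [StarRing R] {p : R}
    (hp : IsStarProjection p) : star p * p + star (1 - p) * (1 - p) = 1 := by
  rw [hp.isSelfAdjoint.star_eq, hp.isIdempotentElem.eq, hp.one_sub.isSelfAdjoint.star_eq,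
    hp.one_sub.isIdempotentElem.eq, add_sub_cancel]

lemma isStarProjection_mul_of_mul_mul_eq {n k R : Type*} [Fintype n] [Fintype k]
    [NonUnitalSemiring R] [StarRing R] {U : Matrix n k R} {G : Matrix k n R}
    (hUGU : U * G * U = U) (hUG : (U * G).IsHermitian) : IsStarProjection (U * G) where
  isIdempotentElem := by rw [IsIdempotentElem, ← Matrix.mul_assoc, hUGU]
  isSelfAdjoint := hUG

lemma isUnit_transpose_mul_self_of_rank_eq_card {n k R : Type*} [Fintype n] [Fintype k]
    [DecidableEq k] [Field R] [LinearOrder R] [IsStrictOrderedRing R] {U : Matrix n k R}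
    (hU : U.rank = Fintype.card k) : IsUnit (Uᵀ * U) := by
  rw [← linearIndependent_cols_iff_isUnit, linearIndependent_iff_card_eq_finrank_span,
    Set.finrank, ← rank_eq_finrank_span_cols, rank_transpose_mul_self, hU]

lemma mul_inv_mul_transpose_mul_self {n k R : Type*} [Fintype n] [Fintype k] [DecidableEq k]
    [CommRing R] {U : Matrix n k R} (hU : IsUnit (Uᵀ * U)) :
    U * ((Uᵀ * U)⁻¹ * Uᵀ) * U = U := by
  rw [Matrix.mul_assoc, Matrix.mul_assoc,
    nonsing_inv_mul _ ((isUnit_iff_isUnit_det _).mp hU), Matrix.mul_one]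

lemma isHermitian_mul_inv_mul_transpose {n k : Type*} [Fintype n] [Fintype k] [DecidableEq k]
    (U : Matrix n k ℝ) : (U * ((Uᵀ * U)⁻¹ * Uᵀ)).IsHermitian := by
  rw [← conjTranspose_eq_transpose_of_trivial, ← Matrix.mul_assoc]
  exact isHermitian_mul_mul_conjTranspose U (isHermitian_conjTranspose_mul_self U).inv

end OrthogonalProjection

section GaussianVector

variable {ι κ : Type*} [Fintype ι]

lemma measurable_vecMul (B : Matrix ι κ ℝ) : Measurable (· ᵥ* B) :=
  measurable_pi_lambda _ fun j => by
    simp only [vecMul, dotProduct]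
    fun_prop

lemma charFun_map_vecMul [Fintype κ] (μ : Measure (ι → ℝ)) (B : Matrix ι κ ℝ)
    (t : EuclideanSpace ℝ κ) :
    charFun ((μ.map (· ᵥ* B)).map (WithLp.toLp 2)) t =
      charFun (μ.map (WithLp.toLp 2)) (WithLp.toLp 2 (B *ᵥ t.ofLp)) := by
  have hB := measurable_vecMul B
  rw [Measure.map_map (by fun_prop) hB, charFun_apply, charFun_apply,
    integral_map (by fun_prop) (by fun_prop), integral_map (by fun_prop) (by fun_prop)]
  simp only [Function.comp_apply, EuclideanSpace.inner_eq_star_dotProduct, star_trivial,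
    dotProduct_comm _ (_ ᵥ* B), dotProduct_comm (B *ᵥ _), dotProduct_mulVec]

lemma prod_charFun_gaussianReal (v : NNReal) (t : ι → ℝ) :
    ∏ i, charFun (gaussianReal 0 v) (t i) = Complex.exp (-(v * (t ⬝ᵥ t) / 2 : ℝ)) := by
  simp only [charFun_gaussianReal, ← Complex.exp_sum, dotProduct, Finset.mul_sum, Finset.sum_div]
  congr 1
  push_cast
  rw [← Finset.sum_neg_distrib]
  exact Finset.sum_congr rfl fun i _ => by ring

lemma measurePreserving_vecMul_pi_gaussianReal [Fintype κ] [DecidableEq κ] (v : NNReal)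
    {B : Matrix ι κ ℝ} (hB : Bᵀ * B = 1) :
    MeasurePreserving (· ᵥ* B) (Measure.pi fun _ : ι => gaussianReal 0 v)
      (Measure.pi fun _ : κ => gaussianReal 0 v) where
  measurable := measurable_vecMul B
  map_eq := by
    refine charFun_eq_pi_iff.mp fun t => ?_
    have hBt : B *ᵥ t.ofLp ⬝ᵥ B *ᵥ t.ofLp = t.ofLp ⬝ᵥ t.ofLp := by
      rw [dotProduct_mulVec, vecMul_mulVec, hB, vecMul_one]
    rw [charFun_map_vecMul, charFun_pi, prod_charFun_gaussianReal, prod_charFun_gaussianReal, hBt]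

end GaussianVector

/-- Mathlib puts no σ-algebra on `Matrix`; this is the product one on the entries. -/
local instance {m n : Type*} : MeasurableSpace (Matrix m n ℝ) := MeasurableSpace.pi

section GaussianMatrix

variable {m n k l : Type*}

lemma measurable_mul_right [Fintype n] (B : Matrix n k ℝ) :
    Measurable fun X : Matrix m n ℝ => X * B :=
  measurable_pi_lambda _ fun i =>
    (measurable_vecMul B).comp (measurable_pi_apply i)

variable [Fintype m] [Fintype n] [Fintype k] [Fintype l]

/-- The law of an `m × n` random matrix with i.i.d. `N(0, v)` entries, encoded row by row. -/
noncomputable def gaussianMatrix (m n : Type*) [Fintype m] [Fintype n] (v : NNReal) :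
    Measure (Matrix m n ℝ) :=
  Measure.pi fun _ : m => Measure.pi fun _ : n => gaussianReal 0 v

instance (v : NNReal) : IsProbabilityMeasure (gaussianMatrix m n v) :=
  inferInstanceAs (IsProbabilityMeasure (Measure.pi _))

lemma measurePreserving_mul_gaussianMatrix [DecidableEq k] (v : NNReal) {B : Matrix n k ℝ}
    (hB : Bᵀ * B = 1) :
    MeasurePreserving (fun X : Matrix m n ℝ => X * B) (gaussianMatrix m n v)
      (gaussianMatrix m k v) :=
  measurePreserving_pi _ _ fun _ => measurePreserving_vecMul_pi_gaussianReal v hB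

lemma measurePreserving_fromCols_gaussianMatrix (v : NNReal) :
    MeasurePreserving (fun X : Matrix m n ℝ × Matrix m k ℝ => fromCols X.1 X.2)
      ((gaussianMatrix m n v).prod (gaussianMatrix m k v)) (gaussianMatrix m (n ⊕ k) v) :=
  (measurePreserving_pi _ _ fun _ : m =>
    measurePreserving_sumPiEquivProdPi_symm fun _ : n ⊕ k => gaussianReal 0 v).comp
    (measurePreserving_arrowProdEquivProdArrow (n → ℝ) (k → ℝ) m _ _).symm

lemma measurePreserving_mul_add_mul_gaussianMatrix [DecidableEq l] (v : NNReal)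
    {B : Matrix n l ℝ} {C : Matrix k l ℝ} (hBC : Bᵀ * B + Cᵀ * C = 1) :
    MeasurePreserving (fun X : Matrix m n ℝ × Matrix m k ℝ => X.1 * B + X.2 * C)
      ((gaussianMatrix m n v).prod (gaussianMatrix m k v)) (gaussianMatrix m l v) := by
  have hstack : (fromRows B C)ᵀ * fromRows B C = 1 := by
    rw [transpose_fromRows, fromCols_mul_fromRows, hBC]
  simpa only [Function.comp_def, fromCols_mul_fromRows] using
    (measurePreserving_mul_gaussianMatrix v hstack).comp
      (measurePreserving_fromCols_gaussianMatrix (m := m) v)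

lemma hasLaw_mul_add_mul_one_sub [DecidableEq n] {Ω : Type*} [MeasurableSpace Ω]
    {P : Measure Ω} {v : NNReal} {A At : Ω → Matrix m n ℝ}
    (hA : HasLaw A (gaussianMatrix m n v) P) (hAt : HasLaw At (gaussianMatrix m n v) P)
    (hindep : A ⟂ᵢ[P] At) {Q : Matrix n n ℝ} (hQ : IsStarProjection Q) :
    HasLaw (fun ω => A ω * Q + At ω * (1 - Q)) (gaussianMatrix m n v) P := by
  have := hA.isProbabilityMeasure
  have hQQ : Qᵀ * Q + (1 - Q)ᵀ * (1 - Q) = 1 := by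
    simpa only [star_eq_conjTranspose, conjTranspose_eq_transpose_of_trivial] using
      star_mul_self_add_star_one_sub_mul_one_sub hQ
  exact (measurePreserving_mul_add_mul_gaussianMatrix v hQQ).fun_comp_hasLaw
    (hindep.hasLaw_prod hA hAt)

/-- The conditions on `G` say that `U * G` is the orthogonal projection onto the column space of
`U`; the Moore–Penrose inverse satisfies them whatever the rank of `U`. -/
theorem gaussian_matrix_conditioning_general [DecidableEq n] {Ω : Type*} [MeasurableSpace Ω]
    {P : Measure Ω} {v : NNReal} {A At : Ω → Matrix m n ℝ}
    (hA : HasLaw A (gaussianMatrix m n v) P) (hAt : HasLaw At (gaussianMatrix m n v) P)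
    (hindep : A ⟂ᵢ[P] At) {U : Matrix n k ℝ} {G : Matrix k n ℝ} (hUGU : U * G * U = U)
    (hUG : (U * G).IsHermitian) :
    IdentDistrib (fun ω => (A ω * U, A ω))
      (fun ω => (A ω * U, A ω * U * G + At ω * (1 - U * G))) P P := by
  have hlaw : HasLaw (fun ω => A ω * U * G + At ω * (1 - U * G)) (gaussianMatrix m n v) P := by
    simpa only [Matrix.mul_assoc] using
      hasLaw_mul_add_mul_one_sub hA hAt hindep (isStarProjection_mul_of_mul_mul_eq hUGU hUG)
  have hobs (ω : Ω) : (A ω * U * G + At ω * (1 - U * G)) * U = A ω * U := by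
    rw [Matrix.add_mul, Matrix.mul_assoc (At ω), Matrix.sub_mul, hUGU, Matrix.one_mul, sub_self,
      Matrix.mul_zero, add_zero, Matrix.mul_assoc, Matrix.mul_assoc, ← Matrix.mul_assoc U, hUGU]
  have hident : IdentDistrib A (fun ω => A ω * U * G + At ω * (1 - U * G)) P P :=
    ⟨hA.aemeasurable, hlaw.aemeasurable, hA.map_eq.trans hlaw.map_eq.symm⟩
  simpa only [Function.comp_def, hobs, id] using
    hident.comp ((measurable_mul_right U).prodMk measurable_id)

end GaussianMatrix

/-- Conditioning an i.i.d. Gaussian matrix on linear observations: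
if `A` and `Ã` are independent `M × N` random matrices with i.i.d. `N(0, σ²)` entries and
`U ∈ ℝ^{N×t}` is a deterministic matrix of full column rank, then with
`U† = (UᵀU)⁻¹Uᵀ` and `P⊥_U = I − U(UᵀU)⁻¹Uᵀ`, the pairs `(AU, A)` and
`(AU, (AU)U† + Ã P⊥_U)` have the same joint distribution. -/
theorem gaussian_matrix_conditioning
    {Ω : Type*} [MeasureSpace Ω] [IsProbabilityMeasure (ℙ : Measure Ω)]
    (M N t : ℕ) (hM : 0 < M) (hN : 0 < N) (htpos : 0 < t) (htN : t ≤ N)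
    (v : NNReal) (hv : 0 < v)
    (A At : Ω → Matrix (Fin M) (Fin N) ℝ)
    (hAm : Measurable fun ω => (fun i j => A ω i j : Fin M → Fin N → ℝ))
    (hAtm : Measurable fun ω => (fun i j => At ω i j : Fin M → Fin N → ℝ))
    (hAlaw : Measure.map (fun ω => (fun i j => A ω i j : Fin M → Fin N → ℝ)) ℙ =
      Measure.pi fun _ : Fin M => Measure.pi fun _ : Fin N => gaussianReal 0 v)
    (hAtlaw : Measure.map (fun ω => (fun i j => At ω i j : Fin M → Fin N → ℝ)) ℙ =
      Measure.pi fun _ : Fin M => Measure.pi fun _ : Fin N => gaussianReal 0 v)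
    (hindep : IndepFun (fun ω => (fun i j => A ω i j : Fin M → Fin N → ℝ))
      (fun ω => (fun i j => At ω i j : Fin M → Fin N → ℝ)))
    (U : Matrix (Fin N) (Fin t) ℝ) (hU : U.rank = t)
    (Udag : Matrix (Fin t) (Fin N) ℝ) (hUdag : Udag = (Uᵀ * U)⁻¹ * Uᵀ)
    (Pperp : Matrix (Fin N) (Fin N) ℝ) (hPperp : Pperp = 1 - U * (Uᵀ * U)⁻¹ * Uᵀ) :
    Measure.map (fun ω =>
        ((fun i j => (A ω * U) i j : Fin M → Fin t → ℝ),
          (fun i j => A ω i j : Fin M → Fin N → ℝ))) ℙ =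
      Measure.map (fun ω =>
        ((fun i j => (A ω * U) i j : Fin M → Fin t → ℝ),
          (fun i j => (A ω * U * Udag + At ω * Pperp) i j : Fin M → Fin N → ℝ))) ℙ := by
  have hUU : IsUnit (Uᵀ * U) := isUnit_transpose_mul_self_of_rank_eq_card (by simpa using hU)
  obtain rfl : Pperp = 1 - U * Udag := by rw [hPperp, hUdag, Matrix.mul_assoc]
  subst hUdag
  exact (gaussian_matrix_conditioning_general ⟨hAm.aemeasurable, hAlaw⟩ ⟨hAtm.aemeasurable, hAtlaw⟩
    hindep (mul_inv_mul_transpose_mul_self hUU) (isHermitian_mul_inv_mul_transpose U)).map_eq
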